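/- Let S be a reduced commutative semigroup with zero. The following are equivalent: (1) the chromatic number χ(Γ(S)) is finite; (2) Γ(S) contains no infinite clique (the clique number ω(Γ(S)) is finite); (3) the zero ideal {0} of S is an intersection of finitely many prime ideals of S. -/

import Mathlib

/-- A commutative semigroup with a zero element. -/
class CommSemigroupWithZero (S : Type*) extends SemigroupWithZero S where
  mul_comm : ∀ a b : S, a * b = b * a

variable (S : Type*) [CommSemigroupWithZero S]

/-- The set of zero-divisors of `S`. -/
def zdivs : Set S := {x | ∃ y, y ≠ 0 ∧ x * y = 0}

/-- The vertex set `Z(S)* = Z(S) \ {0}` of the zero-divisor graph. -/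
def zdVerts : Set S := {x | x ≠ 0 ∧ x ∈ zdivs S}

/-- The zero-divisor graph `Γ(S)`. -/
def zdGraph : SimpleGraph (zdVerts S) where
  Adj x y := x ≠ y ∧ (x : S) * y = 0
  symm := by
    constructor
    rintro x y ⟨hne, h⟩
    exact ⟨hne.symm, by rw [CommSemigroupWithZero.mul_comm]; exact h⟩
  loopless := ⟨fun x h => h.1 rfl⟩

/-- `I` is an ideal of the semigroup `S`. -/
def IsIdeal (I : Set S) : Prop := I.Nonempty ∧ ∀ x ∈ I, ∀ s : S, x * s ∈ I

/-- `p` is a prime ideal of the semigroup `S`. -/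
def IsPrimeIdeal (p : Set S) : Prop :=
  IsIdeal S p ∧ ∀ x y : S, (∀ s : S, x * s * y ∈ p) → x ∈ p ∨ y ∈ p

/-- `x` is nilpotent: `x ^ (n + 1) = 0` for some `n`. -/
def IsNil (x : S) : Prop := ∃ n : ℕ, (fun y => x * y)^[n] x = 0

/-- The annihilator of `a`. -/
def Ann (a : S) : Set S := {s | s * a = 0}

/-- The set of associated primes of `S`. -/
def Ass : Set (Set S) := {p | IsPrimeIdeal S p ∧ ∃ x : S, p = Ann S x}

/-!
Suppose `Γ(S)` has no infinite clique. Along a strictly increasing chain of annihilators `Ann(aᵢ)`,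
elements `xᵢ ∈ Ann(aᵢ₊₁) \ Ann(aᵢ)` give nonzero products `xᵢaᵢ` that annihilate each other, so
annihilators satisfy the ascending chain condition. A maximal annihilator of a nonzero element is
prime, and elements with distinct maximal annihilators annihilate each other, so there are only
finitely many such primes. Their intersection is zero: if `x ≠ 0` lay in all of them, a maximal
`Ann(a) ⊇ Ann(x)` would contain `x`, whence `a ∈ Ann(x) ⊆ Ann(a)` and `a² = 0`.

Conversely, if finitely many primes intersect in zero, color each vertex by a prime that misses it.
-/

section

variable {S}

instance CommSemigroupWithZero.toCommSemigroup : CommSemigroup S where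
  mul_comm := CommSemigroupWithZero.mul_comm

theorem IsNil.of_mul_self_eq_zero {x : S} (hx : x * x = 0) : IsNil S x :=
  ⟨1, hx⟩

theorem IsIdeal.zero_mem {I : Set S} (hI : IsIdeal S I) : (0 : S) ∈ I := by
  obtain ⟨⟨x, hx⟩, hmul⟩ := hI
  simpa only [mul_zero] using hmul x hx 0

theorem isPrimeIdeal_iff {p : Set S} :
    IsPrimeIdeal S p ↔ IsIdeal S p ∧ ∀ x y : S, x * y ∈ p → x ∈ p ∨ y ∈ p := by
  refine and_congr_right fun hp => ⟨fun h x y hxy => h x y fun s => ?_, fun h x y hxy => ?_⟩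
  · rw [mul_right_comm]
    exact hp.2 _ hxy s
  · rcases h (x * x) y (hxy x) with hxx | hy
    · exact .inl ((h x x hxx).elim id id)
    · exact .inr hy

theorem mem_ann {s a : S} : s ∈ Ann S a ↔ s * a = 0 :=
  Iff.rfl

theorem mem_ann_comm {s a : S} : s ∈ Ann S a ↔ a ∈ Ann S s := by
  rw [mem_ann, mem_ann, mul_comm]

theorem isIdeal_ann (a : S) : IsIdeal S (Ann S a) := by
  refine ⟨⟨0, zero_mul a⟩, fun x hx s => ?_⟩
  rw [mem_ann, mul_right_comm, mem_ann.1 hx, zero_mul]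

theorem ann_subset_ann_mul_right (a b : S) : Ann S a ⊆ Ann S (a * b) := by
  intro s hs
  rw [mem_ann, ← mul_assoc, mem_ann.1 hs, zero_mul]

theorem ann_mul_eq_of_maximalFor {a b : S} (ha : MaximalFor (· ≠ 0) (Ann S) a) (hab : a * b ≠ 0) :
    Ann S (a * b) = Ann S a :=
  have hle := ann_subset_ann_mul_right a b
  (ha.2 hab hle).antisymm hle

theorem isPrimeIdeal_ann_of_maximalFor {a : S} (ha : MaximalFor (· ≠ 0) (Ann S) a) :
    IsPrimeIdeal S (Ann S a) := by
  refine isPrimeIdeal_iff.2 ⟨isIdeal_ann a, fun x y hxy => or_iff_not_imp_right.2 fun hy => ?_⟩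
  have hay : a * y ≠ 0 := fun h => hy (mem_ann_comm.1 h)
  rw [← ann_mul_eq_of_maximalFor ha hay, mem_ann, mul_comm a, ← mul_assoc]
  exact hxy

theorem mul_eq_zero_of_maximalFor_ann {a b : S} (ha : MaximalFor (· ≠ 0) (Ann S) a)
    (hb : MaximalFor (· ≠ 0) (Ann S) b) (hne : Ann S a ≠ Ann S b) : a * b = 0 := by
  by_contra hab
  have hba : b * a ≠ 0 := mul_comm a b ▸ hab
  exact hne <| calc
    Ann S a = Ann S (a * b) := (ann_mul_eq_of_maximalFor ha hab).symm
    _ = Ann S (b * a) := by rw [mul_comm]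
    _ = Ann S b := ann_mul_eq_of_maximalFor hb hba

theorem finite_of_isClique_of_coloring {V ι : Type*} [Finite ι] {G : SimpleGraph V}
    (C : G.Coloring ι) {T : Set V} (hT : G.IsClique T) : T.Finite := by
  have hinj : Set.InjOn C T := fun x hx y hy hxy =>
    by_contra fun hne => C.valid (hT hx hy hne) hxy
  exact .of_injOn (Set.mapsTo_univ C T) hinj Set.finite_univ

theorem nonempty_coloring_of_iInter_eq_singleton_zero {ι : Type*} {P : ι → Set S}
    (hP : ∀ i, IsPrimeIdeal S (P i)) (hzero : ⋂ i, P i = {0}) :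
    Nonempty ((zdGraph S).Coloring ι) := by
  have hmiss (x : zdVerts S) : ∃ i, (x : S) ∉ P i := by
    by_contra! hx
    exact x.2.1 (hzero.subset (Set.mem_iInter.2 hx))
  choose c hc using hmiss
  refine ⟨.mk c fun {x y} hxy hcxy => ?_⟩
  obtain ⟨hideal, hprime⟩ := isPrimeIdeal_iff.1 (hP (c x))
  have hmem : (x * y : S) ∈ P (c x) := hxy.2 ▸ hideal.zero_mem
  rcases hprime x y hmem with hx | hy
  · exact hc x hx
  · exact hc y (hcxy ▸ hy)

section NoInfiniteClique

variable (hsq : ∀ x : S, x * x = 0 → x = 0)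
  (hclique : ∀ T : Set (zdVerts S), (zdGraph S).IsClique T → T.Finite)
include hsq hclique

theorem finite_of_pairwise_mul_eq_zero {ι : Type*} {f : ι → S} (hf : ∀ i, f i ≠ 0)
    (hmul : Pairwise fun i j => f i * f j = 0) : Finite ι := by
  by_contra! hι
  have hinj : Function.Injective f := fun i j hij => by_contra fun hne =>
    hf i (hsq _ (by simpa only [← hij] using hmul hne))
  have hvert (i : ι) : f i ∈ zdVerts S := by
    obtain ⟨j, hj⟩ := exists_ne i
    exact ⟨hf i, f j, hf j, hmul hj.symm⟩
  have hginj : Function.Injective (Set.codRestrict f (zdVerts S) hvert) :=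
    hinj.codRestrict hvert
  refine Set.infinite_range_of_injective hginj (hclique _ ?_)
  rintro _ ⟨i, rfl⟩ _ ⟨j, rfl⟩ hne
  exact ⟨hne, hmul (ne_of_apply_ne _ hne)⟩

theorem not_strictMono_ann (a : ℕ → S) : ¬StrictMono fun n => Ann S (a n) := by
  intro hmono
  choose x hx hxa using fun n => Set.exists_of_ssubset (hmono (Nat.lt_succ_self n))
  have hmul_lt {i j : ℕ} (hij : i < j) : x i * a i * (x j * a j) = 0 := by
    have hxi : x i * a j = 0 := hmono.monotone (Nat.succ_le_of_lt hij) (hx i)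
    calc x i * a i * (x j * a j) = x i * a j * (a i * x j) := by ac_rfl
      _ = 0 := by rw [hxi, zero_mul]
  have hmul : Pairwise fun i j => x i * a i * (x j * a j) = 0 := fun i j hij =>
    hij.lt_or_gt.elim hmul_lt fun hji => (mul_comm _ _).trans (hmul_lt hji)
  have : Finite ℕ := finite_of_pairwise_mul_eq_zero hsq hclique hxa hmul
  exact not_finite ℕ

theorem wellFounded_ann_ssuperset : WellFounded fun a b : S => Ann S b ⊂ Ann S a := by
  rw [wellFounded_iff_isEmpty_descending_chain, isEmpty_subtype]
  exact fun a ha => not_strictMono_ann hsq hclique a (strictMono_nat_of_lt_succ ha)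

theorem exists_maximalFor_ann_superset {x : S} (hx : x ≠ 0) :
    ∃ a, MaximalFor (· ≠ 0) (Ann S) a ∧ Ann S x ⊆ Ann S a := by
  obtain ⟨a, ⟨ha, hxa⟩, hmax⟩ := (wellFounded_ann_ssuperset hsq hclique).has_min
    {b : S | b ≠ 0 ∧ Ann S x ⊆ Ann S b} ⟨x, hx, subset_rfl⟩
  refine ⟨a, ⟨ha, fun b hb hab => ?_⟩, hxa⟩
  by_contra hba
  exact hmax b ⟨hb, hxa.trans hab⟩ ⟨hab, hba⟩

theorem finite_image_ann_maximalFor : (Ann S '' {a | MaximalFor (· ≠ 0) (Ann S) a}).Finite := by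
  choose a ha hann using fun p : Ann S '' {a | MaximalFor (· ≠ 0) (Ann S) a} => p.2
  refine finite_of_pairwise_mul_eq_zero hsq hclique (fun p => (ha p).1) fun p q hpq => ?_
  refine mul_eq_zero_of_maximalFor_ann (ha p) (ha q) ?_
  rwa [hann, hann, Subtype.coe_ne_coe]

theorem sInter_image_ann_maximalFor :
    ⋂₀ (Ann S '' {a | MaximalFor (· ≠ 0) (Ann S) a}) = {0} := by
  rw [Set.sInter_image]
  refine Set.Subset.antisymm (fun x hx => ?_) ?_
  · by_contra hx0
    obtain ⟨a, ha, hxa⟩ := exists_maximalFor_ann_superset hsq hclique hx0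
    have hmem : x ∈ Ann S a := Set.mem_iInter₂.1 hx a ha
    exact ha.1 (hsq a (hxa (mem_ann_comm.1 hmem)))
  · exact Set.singleton_subset_iff.2 (Set.mem_iInter₂.2 fun a _ => zero_mul a)

theorem exists_fin_isPrimeIdeal_iInter_eq_singleton_zero :
    ∃ (n : ℕ) (P : Fin n → Set S), (∀ i, IsPrimeIdeal S (P i)) ∧ ⋂ i, P i = {0} := by
  obtain ⟨n, P, -, hP⟩ := (finite_image_ann_maximalFor hsq hclique).fin_param
  refine ⟨n, P, fun i => ?_, ?_⟩
  · obtain ⟨a, ha, hai⟩ := hP.subset (Set.mem_range_self i)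
    exact hai ▸ isPrimeIdeal_ann_of_maximalFor ha
  · rw [← Set.sInter_range, hP, sInter_image_ann_maximalFor hsq hclique]

end NoInfiniteClique

end

/-- For a reduced commutative semigroup `S` with zero, the following
are equivalent: (1) the chromatic number of `Γ(S)` is finite; (2) `Γ(S)` contains no
infinite clique; (3) the zero ideal is an intersection of finitely many prime
ideals. -/
theorem chromatic_finite_tfae
    (hred : ∀ x : S, IsNil S x → x = 0) :
    ((∃ n : ℕ, (zdGraph S).Colorable n) ↔
        (∀ T : Set (zdVerts S), (zdGraph S).IsClique T → T.Finite)) ∧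
    ((∀ T : Set (zdVerts S), (zdGraph S).IsClique T → T.Finite) ↔
        (∃ (n : ℕ) (P : Fin n → Set S),
          (∀ i, IsPrimeIdeal S (P i)) ∧ (⋂ i, P i) = {0})) := by
  have hsq (x : S) (hx : x * x = 0) : x = 0 := hred x (.of_mul_self_eq_zero hx)
  have h12 : (∃ n : ℕ, (zdGraph S).Colorable n) →
      ∀ T : Set (zdVerts S), (zdGraph S).IsClique T → T.Finite :=
    fun ⟨_, ⟨C⟩⟩ _ hT => finite_of_isClique_of_coloring C hT
  have h23 := exists_fin_isPrimeIdeal_iInter_eq_singleton_zero hsq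
  have h31 : (∃ (n : ℕ) (P : Fin n → Set S), (∀ i, IsPrimeIdeal S (P i)) ∧ (⋂ i, P i) = {0}) →
      ∃ n : ℕ, (zdGraph S).Colorable n :=
    fun ⟨n, _, hP, hzero⟩ => ⟨n, nonempty_coloring_of_iInter_eq_singleton_zero hP hzero⟩
  exact ⟨⟨h12, h31 ∘ h23⟩, ⟨h23, h12 ∘ h31⟩⟩
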